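/- Let p be a probability mass function on a finite alphabet Y and let p̂(n) be the empirical distribution of n i.i.d. samples from p. Then H(p) − log(1 + (|Y|−1)/n) ≤ E[H(p̂(n))] ≤ H(p), where H is the Shannon entropy with natural logarithm. -/

import Mathlib

open MeasureTheory Real

/-- The empirical frequency of the letter `y` in the sample `ω`. -/
noncomputable def empiricalFreq {Y : Type*} [DecidableEq Y] {n : ℕ} (y : Y) (ω : Fin n → Y) : ℝ :=
  (∑ ℓ, if ω ℓ = y then (1 : ℝ) else 0) / n

lemma empiricalFreq_nonneg {Y : Type*} [DecidableEq Y] {n : ℕ} (y : Y) (ω : Fin n → Y) :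
    0 ≤ empiricalFreq y ω :=
  div_nonneg (Finset.sum_nonneg fun _ _ => by split_ifs <;> simp) n.cast_nonneg

lemma empiricalFreq_le_one {Y : Type*} [DecidableEq Y] {n : ℕ} (y : Y) (ω : Fin n → Y) :
    empiricalFreq y ω ≤ 1 := by
  refine div_le_one_of_le₀ ?_ n.cast_nonneg
  calc (∑ ℓ, if ω ℓ = y then (1 : ℝ) else 0) ≤ ∑ _ℓ : Fin n, (1 : ℝ) :=
        Finset.sum_le_sum fun _ _ => by split_ifs <;> simp
    _ = n := by simp

/-- The expansion of `x * log x` around `q` behind the bound of the relative entropy by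
the logarithm of one plus the chi-square divergence, with the outer logarithm linearised at `c`. -/
lemma le_negMulLog_of_pos {x q c : ℝ} (hx : 0 ≤ x) (hq : 0 < q) (hc : 0 < c) :
    x * (1 - log q - log c) - x ^ 2 / (q * c) ≤ negMulLog x := by
  rcases hx.eq_or_lt with rfl | hx
  · simp
  · have h := mul_le_mul_of_nonneg_left
      (log_le_sub_one_of_pos (div_pos hx (mul_pos hq hc))) hx.le
    rw [log_div hx.ne' (mul_pos hq hc).ne', log_mul hq.ne' hc.ne'] at h
    have h' : x * (x / (q * c) - 1) = x ^ 2 / (q * c) - x := by ring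
    rw [negMulLog]
    linarith

section Moments

variable {Y : Type*} [Fintype Y] [DecidableEq Y] [MeasurableSpace Y]
  [MeasurableSingletonClass Y] (p : PMF Y) {n : ℕ} (y : Y)

lemma PMF.integral_ite_eq :
    ∫ z, (if z = y then (1 : ℝ) else 0) ∂p.toMeasure = (p y).toReal := by
  simp [PMF.integral_eq_sum]

lemma PMF.variance_ite_eq :
    ProbabilityTheory.variance (fun z => if z = y then (1 : ℝ) else 0) p.toMeasure
      = (p y).toReal * (1 - (p y).toReal) := by
  have hsq : (fun z => if z = y then (1 : ℝ) else 0) ^ 2 =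
      fun z => if z = y then (1 : ℝ) else 0 := by
    ext z
    by_cases h : z = y <;> simp [h]
  rw [ProbabilityTheory.variance_eq_sub .of_discrete, hsq, p.integral_ite_eq]
  ring

lemma integral_empiricalFreq (hn : 0 < n) :
    ∫ ω, empiricalFreq y ω ∂(Measure.pi fun _ : Fin n => p.toMeasure) = (p y).toReal := by
  have hn' : (n : ℝ) ≠ 0 := by positivity
  simp only [empiricalFreq]
  rw [integral_div, integral_finsetSum _ fun _ _ => .of_finite]
  have h (ℓ : Fin n) : ∫ ω : Fin n → Y, (if ω ℓ = y then (1 : ℝ) else 0)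
      ∂(Measure.pi fun _ : Fin n => p.toMeasure) = (p y).toReal := by
    rw [← p.integral_ite_eq y]
    exact integral_comp_eval (μ := fun _ : Fin n => p.toMeasure) (i := ℓ)
      (f := fun z => if z = y then (1 : ℝ) else 0) .of_discrete
  simp only [h, Finset.sum_const, Finset.card_univ, Fintype.card_fin, nsmul_eq_mul]
  field_simp

lemma variance_empiricalFreq (hn : 0 < n) :
    ProbabilityTheory.variance (empiricalFreq y) (Measure.pi fun _ : Fin n => p.toMeasure)
      = (p y).toReal * (1 - (p y).toReal) / n := by
  have hn' : (n : ℝ) ≠ 0 := by positivity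
  have hfun : (empiricalFreq y : (Fin n → Y) → ℝ) = fun ω => (n : ℝ)⁻¹ *
      (∑ ℓ, fun ω : Fin n → Y => if ω ℓ = y then (1 : ℝ) else 0) ω := by
    ext ω
    simp only [empiricalFreq, Finset.sum_apply]
    ring
  have hsum := ProbabilityTheory.variance_sum_pi (μ := fun _ : Fin n => p.toMeasure)
    (X := fun _ z => if z = y then (1 : ℝ) else 0) fun _ => .of_discrete
  rw [hfun, ProbabilityTheory.variance_const_mul, hsum]
  simp only [p.variance_ite_eq, Finset.sum_const, Finset.card_univ, Fintype.card_fin, nsmul_eq_mul]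
  field_simp

lemma integral_empiricalFreq_sq (hn : 0 < n) :
    ∫ ω, empiricalFreq y ω ^ 2 ∂(Measure.pi fun _ : Fin n => p.toMeasure)
      = (p y).toReal ^ 2 + (p y).toReal * (1 - (p y).toReal) / n := by
  have h := variance_empiricalFreq p y hn
  rw [ProbabilityTheory.variance_eq_sub .of_discrete, integral_empiricalFreq p y hn] at h
  simp only [Pi.pow_apply] at h
  linarith

lemma integral_negMulLog_empiricalFreq_le (hn : 0 < n) :
    ∫ ω, negMulLog (empiricalFreq y ω) ∂(Measure.pi fun _ : Fin n => p.toMeasure)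
      ≤ negMulLog (p y).toReal := by
  rw [← integral_empiricalFreq p y hn]
  exact concaveOn_negMulLog.le_map_integral continuous_negMulLog.continuousOn isClosed_Ici
    (.of_forall fun ω => empiricalFreq_nonneg y ω) .of_finite .of_finite

lemma le_integral_negMulLog_empiricalFreq (hn : 0 < n) {c : ℝ} (hc : 0 < c) :
    negMulLog (p y).toReal + (p y).toReal * (1 - log c)
        - ((p y).toReal + (1 - (p y).toReal) / n) / c
      ≤ ∫ ω, negMulLog (empiricalFreq y ω) ∂(Measure.pi fun _ : Fin n => p.toMeasure) := by
  have hn' : (0 : ℝ) < n := by positivity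
  rcases (ENNReal.toReal_nonneg : 0 ≤ (p y).toReal).eq_or_lt with hq | hq
  · rw [← hq]
    refine le_trans ?_ (integral_nonneg fun ω =>
      negMulLog_nonneg (empiricalFreq_nonneg y ω) (empiricalFreq_le_one y ω))
    have : 0 ≤ 1 / (n : ℝ) / c := by positivity
    simpa using this
  · calc _ = ∫ ω, (empiricalFreq y ω * (1 - log (p y).toReal - log c)
            - empiricalFreq y ω ^ 2 / ((p y).toReal * c))
            ∂(Measure.pi fun _ : Fin n => p.toMeasure) := by
          rw [integral_sub .of_finite .of_finite, integral_mul_const, integral_div,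
            integral_empiricalFreq p y hn, integral_empiricalFreq_sq p y hn, negMulLog]
          field_simp
          ring
      _ ≤ _ := integral_mono .of_finite .of_finite fun ω =>
          le_negMulLog_of_pos (empiricalFreq_nonneg y ω) hq hc

end Moments

/-- Bias of the plug-in entropy estimator:
`H(p) − log(1 + (|Y|−1)/n) ≤ E[H(p̂(n))] ≤ H(p)`. -/
theorem stmt_2 {Y : Type*} [Fintype Y] [DecidableEq Y] [MeasurableSpace Y]
    [MeasurableSingletonClass Y] (p : PMF Y) (n : ℕ) (hn : 0 < n) :
    (∑ y, Real.negMulLog ((p y).toReal))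
        - Real.log (1 + ((Fintype.card Y : ℝ) - 1) / n)
      ≤ (∫ ω : Fin n → Y,
          (∑ y, Real.negMulLog ((∑ ℓ, if ω ℓ = y then (1 : ℝ) else 0) / n))
          ∂(Measure.pi fun _ : Fin n => p.toMeasure))
    ∧ (∫ ω : Fin n → Y,
          (∑ y, Real.negMulLog ((∑ ℓ, if ω ℓ = y then (1 : ℝ) else 0) / n))
          ∂(Measure.pi fun _ : Fin n => p.toMeasure))
      ≤ ∑ y, Real.negMulLog ((p y).toReal) := by
  change _ ≤ (∫ ω, ∑ y, negMulLog (empiricalFreq y ω) ∂_)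
    ∧ (∫ ω, ∑ y, negMulLog (empiricalFreq y ω) ∂_) ≤ _
  rw [integral_finsetSum _ fun _ _ => .of_finite]
  refine ⟨?_, Finset.sum_le_sum fun y _ => integral_negMulLog_empiricalFreq_le p y hn⟩
  have hn' : (0 : ℝ) < n := by positivity
  have hsum : ∑ y, (p y).toReal = 1 := by
    simpa using (p.integral_eq_sum fun _ => (1 : ℝ)).symm
  have hcard : (1 : ℝ) ≤ Fintype.card Y := by
    obtain ⟨y, -⟩ := p.support_nonempty
    exact_mod_cast Fintype.card_pos_iff.mpr ⟨y⟩
  set c : ℝ := 1 + ((Fintype.card Y : ℝ) - 1) / n with hcdef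
  have hc : 0 < c := by
    have : 0 ≤ ((Fintype.card Y : ℝ) - 1) / n := div_nonneg (by linarith) hn'.le
    linarith
  refine le_trans (le_of_eq ?_)
    (Finset.sum_le_sum fun y _ => le_integral_negMulLog_empiricalFreq p y hn hc)
  rw [Finset.sum_sub_distrib, Finset.sum_add_distrib, ← Finset.sum_mul, ← Finset.sum_div,
    Finset.sum_add_distrib, ← Finset.sum_div, Finset.sum_sub_distrib, hsum]
  simp only [Finset.sum_const, Finset.card_univ, nsmul_eq_mul, mul_one]
  rw [← hcdef, div_self hc.ne']
  ring
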